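/- First Fundamental Theorem for the GFD of arbitrary order (Caputo case): Let n ∈ ℕ and let (κ, k) be a pair of kernels from L_n. Then for every f ∈ C_{−1,k}(0,∞), i.e. every f of the form f = k * φ with φ ∈ C_{−1}(0,∞), and every t > 0, (∗D_{(k)} I_{(κ)} f)(t) = f(t). -/

import Mathlib

open Real MeasureTheory Set Filter Topology

/-- The Laplace convolution `(f * g)(t) = ∫₀ᵗ f(t-τ) g(τ) dτ`. -/
noncomputable def lconv (f g : ℝ → ℝ) : ℝ → ℝ :=
  fun t => ∫ τ in (0:ℝ)..t, f (t - τ) * g τ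

/-- The space `C_{-1}(0,∞)`: functions of the form `t^p f₁(t)` with `p > -1`
and `f₁` continuous on `[0,∞)`. -/
def Cm1 (f : ℝ → ℝ) : Prop :=
  ∃ p : ℝ, -1 < p ∧ ∃ f₁ : ℝ → ℝ, ContinuousOn f₁ (Set.Ici 0) ∧
    ∀ t : ℝ, 0 < t → f t = t ^ p * f₁ t

/-- The subspace `C_{-1,0}(0,∞)`: functions of the form `t^p f₁(t)` with `-1 < p < 0`
and `f₁` continuous on `[0,∞)`. -/
def Cm10 (f : ℝ → ℝ) : Prop :=
  ∃ p : ℝ, -1 < p ∧ p < 0 ∧ ∃ f₁ : ℝ → ℝ, ContinuousOn f₁ (Set.Ici 0) ∧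
    ∀ t : ℝ, 0 < t → f t = t ^ p * f₁ t

/-!
Convolving with `t^m / m!` is `(m + 1)`-fold integration from `0`. By associativity,
`κ * f = κ * (k * φ) = (κ * k) * φ` is an `n`-fold primitive of `φ`, so its derivatives of order
below `n` tend to `0` at `0+` and the Caputo correction vanishes. Likewise
`k * (κ * f) = (κ * k) * f` is an `n`-fold primitive of `f`.

The analytic content is that `C_{-1}` is closed under convolution: substituting `τ = t s` turns
`(t^p a₁) * (t^q b₁)` into `t^(p+q+1) ∫₀¹ (1 - s)^p s^q a₁(t(1 - s)) b₁(t s) ds`, where the Beta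
weight is integrable and the integral depends continuously on `t`. Applied to absolute values, this
also gives the integrability that Fubini's theorem requires for associativity.
-/

theorem intervalIntegrable_one_sub_rpow_mul_rpow {p q : ℝ} (hp : -1 < p) (hq : -1 < q) :
    IntervalIntegrable (fun s : ℝ => (1 - s) ^ p * s ^ q) volume 0 1 := by
  have hbeta := (Complex.betaIntegral_convergent (u := ((q + 1 : ℝ) : ℂ))
    (v := ((p + 1 : ℝ) : ℂ)) (by rw [Complex.ofReal_re]; linarith)
    (by rw [Complex.ofReal_re]; linarith)).norm
  refine hbeta.congr_uIoo ?_
  rw [uIoo_of_le zero_le_one]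
  rintro s ⟨hs₀, hs₁⟩
  have hs : (1 - (s : ℂ)) = ((1 - s : ℝ) : ℂ) := by push_cast; rfl
  simp only [norm_mul]
  rw [Complex.norm_cpow_eq_rpow_re_of_pos hs₀, hs,
    Complex.norm_cpow_eq_rpow_re_of_pos (sub_pos.2 hs₁)]
  simp [mul_comm]

theorem continuous_intervalIntegral_mul {X : Type*} [TopologicalSpace X]
    [FirstCountableTopology X] [WeaklyLocallyCompactSpace X] {μ : Measure ℝ} {a b : ℝ}
    {w : ℝ → ℝ} {u : X → ℝ → ℝ} (hw : IntervalIntegrable w μ a b)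
    (hu : Continuous (Function.uncurry u)) :
    Continuous fun x => ∫ s in a..b, w s * u x s ∂μ := by
  refine continuous_iff_continuousAt.2 fun x₀ => ?_
  obtain ⟨K, hK, hKx₀⟩ := exists_compact_mem_nhds x₀
  obtain ⟨C, hC⟩ := (hK.prod isCompact_uIcc).exists_bound_of_continuousOn
    (hu.continuousOn (s := K ×ˢ uIcc a b))
  refine intervalIntegral.continuousAt_of_dominated_interval (bound := fun s => ‖w s‖ * C)
    (.of_forall fun x => ?_) ?_ (hw.norm.mul_const C) (.of_forall fun s _ => ?_)
  · have hwu : IntervalIntegrable (fun s => w s * u x s) μ a b :=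
      hw.mul_continuousOn (hu.uncurry_left x).continuousOn
    exact (intervalIntegrable_iff.1 hwu).aestronglyMeasurable
  · filter_upwards [hKx₀] with x hx
    refine .of_forall fun s hs => ?_
    rw [norm_mul]
    gcongr
    exact hC (x, s) ⟨hx, uIoc_subset_uIcc hs⟩
  · exact (continuous_const.mul (hu.uncurry_right s)).continuousAt

section Cm1

variable {a b : ℝ → ℝ}

theorem Cm10.cm1 (ha : Cm10 a) : Cm1 a := by
  obtain ⟨p, hp, -, ha⟩ := ha
  exact ⟨p, hp, ha⟩

namespace Cm1

theorem congr (ha : Cm1 a) (hba : EqOn b a (Ioi 0)) : Cm1 b := by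
  obtain ⟨p, hp, a₁, ha₁, ha⟩ := ha
  exact ⟨p, hp, a₁, ha₁, fun t ht => (hba ht).trans (ha t ht)⟩

theorem exists_continuous (ha : Cm1 a) :
    ∃ p : ℝ, -1 < p ∧ ∃ a₁ : ℝ → ℝ, Continuous a₁ ∧ ∀ t : ℝ, 0 < t → a t = t ^ p * a₁ t := by
  obtain ⟨p, hp, a₁, ha₁, ha⟩ := ha
  refine ⟨p, hp, fun t => a₁ (max t 0),
    ha₁.comp_continuous (by fun_prop) fun t => le_max_right t 0, fun t ht => ?_⟩
  simp only [ha t ht, max_eq_left ht.le]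

theorem norm (ha : Cm1 a) : Cm1 fun t => ‖a t‖ := by
  obtain ⟨p, hp, a₁, ha₁, ha⟩ := ha
  refine ⟨p, hp, fun t => ‖a₁ t‖, ha₁.norm, fun t ht => ?_⟩
  simp only [ha t ht, norm_mul, norm_of_nonneg (rpow_nonneg ht.le p)]

theorem continuousOn (ha : Cm1 a) : ContinuousOn a (Ioi 0) := by
  obtain ⟨p, -, a₁, ha₁, ha⟩ := ha
  have hpow : ContinuousOn (fun t : ℝ => t ^ p) (Ioi 0) := fun t ht =>
    (continuousAt_rpow_const t p (.inl (ne_of_gt ht))).continuousWithinAt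
  exact (hpow.mul (ha₁.mono Ioi_subset_Ici_self)).congr ha

theorem intervalIntegrable (ha : Cm1 a) {t : ℝ} (ht : 0 ≤ t) :
    IntervalIntegrable a volume 0 t := by
  obtain ⟨p, hp, a₁, ha₁, ha⟩ := ha.exists_continuous
  refine ((intervalIntegral.intervalIntegrable_rpow' hp).mul_continuousOn
    ha₁.continuousOn).congr_uIoo ?_
  rw [uIoo_of_le ht]
  exact fun s hs => (ha s hs.1).symm

theorem tendsto_primitive_nhdsGT_zero (ha : Cm1 a) :
    Tendsto (fun t => ∫ τ in (0 : ℝ)..t, a τ) (𝓝[>] 0) (𝓝 0) := by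
  have hcont := intervalIntegral.continuousOn_primitive_interval'
    (ha.intervalIntegrable zero_le_one) left_mem_uIcc 0 left_mem_uIcc
  rw [uIcc_of_le zero_le_one, ContinuousWithinAt, intervalIntegral.integral_same] at hcont
  exact hcont.mono_left (nhdsWithin_le_of_mem (Icc_mem_nhdsGT zero_lt_one))

end Cm1

theorem comp_sub_mul_comp_mul_eq_rpow_mul {p q : ℝ} {a₁ b₁ : ℝ → ℝ}
    (ha : ∀ t : ℝ, 0 < t → a t = t ^ p * a₁ t) (hb : ∀ t : ℝ, 0 < t → b t = t ^ q * b₁ t)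
    {t s : ℝ} (ht : 0 < t) (hs : s ∈ Ioo (0 : ℝ) 1) :
    a (t - t * s) * b (t * s) =
      t ^ (p + q) * ((1 - s) ^ p * s ^ q * (a₁ (t * (1 - s)) * b₁ (t * s))) := by
  have hs' : 0 < 1 - s := sub_pos.2 hs.2
  rw [← mul_one_sub, ha _ (mul_pos ht hs'), hb _ (mul_pos ht hs.1), mul_rpow ht.le hs'.le,
    mul_rpow ht.le hs.1.le, rpow_add ht]
  ring

namespace Cm1

theorem intervalIntegrable_comp_sub_mul (ha : Cm1 a) (hb : Cm1 b) {t : ℝ} (ht : 0 < t) :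
    IntervalIntegrable (fun τ => a (t - τ) * b τ) volume 0 t := by
  obtain ⟨p, hp, a₁, ha₁, ha⟩ := ha.exists_continuous
  obtain ⟨q, hq, b₁, hb₁, hb⟩ := hb.exists_continuous
  have hbeta : IntervalIntegrable
      (fun s => (1 - s) ^ p * s ^ q * (a₁ (t * (1 - s)) * b₁ (t * s))) volume 0 1 :=
    (intervalIntegrable_one_sub_rpow_mul_rpow hp hq).mul_continuousOn (by fun_prop)
  have hunit : IntervalIntegrable (fun s => a (t - t * s) * b (t * s)) volume 0 1 := by
    refine (hbeta.const_mul (t ^ (p + q))).congr_uIoo ?_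
    rw [uIoo_of_le zero_le_one]
    exact fun s hs => (comp_sub_mul_comp_mul_eq_rpow_mul ha hb ht hs).symm
  simpa [mul_inv_cancel_left₀ ht.ne'] using hunit.comp_mul_left (c := t⁻¹)

theorem lconv (ha : Cm1 a) (hb : Cm1 b) : Cm1 (lconv a b) := by
  obtain ⟨p, hp, a₁, ha₁, ha⟩ := ha.exists_continuous
  obtain ⟨q, hq, b₁, hb₁, hb⟩ := hb.exists_continuous
  refine ⟨p + q + 1, by linarith,
    fun t => ∫ s in (0 : ℝ)..1, (1 - s) ^ p * s ^ q * (a₁ (t * (1 - s)) * b₁ (t * s)),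
    (continuous_intervalIntegral_mul (intervalIntegrable_one_sub_rpow_mul_rpow hp hq)
      (by fun_prop)).continuousOn, fun t ht => ?_⟩
  calc ∫ τ in (0 : ℝ)..t, a (t - τ) * b τ
      = t * ∫ s in (0 : ℝ)..1, a (t - t * s) * b (t * s) := by
        rw [intervalIntegral.mul_integral_comp_mul_left (f := fun τ => a (t - τ) * b τ),
          mul_zero, mul_one]
    _ = t * ∫ s in (0 : ℝ)..1,
          t ^ (p + q) * ((1 - s) ^ p * s ^ q * (a₁ (t * (1 - s)) * b₁ (t * s))) := by
        rw [intervalIntegral.integral_congr_Ioo_of_le zero_le_one fun s hs =>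
          comp_sub_mul_comp_mul_eq_rpow_mul ha hb ht hs]
    _ = _ := by
        rw [intervalIntegral.integral_const_mul, rpow_add_one ht.ne']
        ring

end Cm1

end Cm1

section lconv

variable {a a' b b' c : ℝ → ℝ}

theorem lconv_congr (ha : EqOn a a' (Ioi 0)) (hb : EqOn b b' (Ioi 0)) :
    EqOn (lconv a b) (lconv a' b') (Ioi 0) := fun _ ht =>
  intervalIntegral.integral_congr_Ioo_of_le (le_of_lt ht) fun _ hτ =>
    congrArg₂ (· * ·) (ha (sub_pos.2 hτ.2)) (hb hτ.1)

theorem lconv_comm (a b : ℝ → ℝ) : lconv a b = lconv b a := by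
  ext t
  have hsub := intervalIntegral.integral_comp_sub_left (a := 0) (b := t)
    (fun τ => a (t - τ) * b τ) t
  simp only [sub_sub_cancel, sub_zero, sub_self] at hsub
  exact hsub.symm.trans (by simp only [lconv, mul_comm])

theorem convolution_indicator_Ioi_eq_indicator_lconv (a b : ℝ → ℝ) :
    convolution ((Ioi 0).indicator a) ((Ioi 0).indicator b) (ContinuousLinearMap.mul ℝ ℝ) volume =
      (Ioi 0).indicator (lconv a b) := by
  refine (posConvolution_eq_convolution_indicator a b (.mul ℝ ℝ) volume).symm.trans <|
    congrArg (indicator (Ioi 0)) (funext fun t => ?_)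
  rw [lconv_comm]
  simp only [lconv, ContinuousLinearMap.mul_apply', mul_comm]

theorem Cm1.convolutionExistsAt_indicator_Ioi (ha : Cm1 a) (hb : Cm1 b) (t : ℝ) :
    ConvolutionExistsAt ((Ioi 0).indicator a) ((Ioi 0).indicator b) t
      (ContinuousLinearMap.mul ℝ ℝ) volume := by
  have hind : (fun τ => (Ioi 0).indicator a τ * (Ioi 0).indicator b (t - τ)) =
      (Ioo 0 t).indicator fun τ => b (t - τ) * a τ := by
    ext τ
    simp only [indicator, mem_Ioi, mem_Ioo, sub_pos]
    split_ifs <;> simp_all [mul_comm]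
  simp only [ConvolutionExistsAt, ContinuousLinearMap.mul_apply', hind]
  rw [integrable_indicator_iff measurableSet_Ioo]
  rcases le_or_gt t 0 with ht | ht
  · simp [Ioo_eq_empty_of_le ht]
  · exact (hb.intervalIntegrable_comp_sub_mul ha ht).1.mono_set Ioo_subset_Ioc_self

theorem Cm1.aestronglyMeasurable_indicator_Ioi (ha : Cm1 a) :
    AEStronglyMeasurable ((Ioi 0).indicator a) volume :=
  (aestronglyMeasurable_indicator_iff measurableSet_Ioi).2
    (ha.continuousOn.aestronglyMeasurable measurableSet_Ioi)

theorem lconv_assoc (ha : Cm1 a) (hb : Cm1 b) (hc : Cm1 c) :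
    EqOn (lconv (lconv a b) c) (lconv a (lconv b c)) (Ioi 0) := by
  intro t ht
  have hassoc := convolution_assoc (μ := volume) (ν := volume) (𝕜 := ℝ)
    (.mul ℝ ℝ) (.mul ℝ ℝ) (.mul ℝ ℝ) (.mul ℝ ℝ)
    (f := (Ioi 0).indicator a) (g := (Ioi 0).indicator b) (k := (Ioi 0).indicator c) (x₀ := t)
    mul_assoc ha.aestronglyMeasurable_indicator_Ioi hb.aestronglyMeasurable_indicator_Ioi
    hc.aestronglyMeasurable_indicator_Ioi
    (.of_forall (ha.convolutionExistsAt_indicator_Ioi hb))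
    (.of_forall <| by
      simpa only [norm_indicator_eq_indicator_norm] using
        hb.norm.convolutionExistsAt_indicator_Ioi hc.norm)
    (by
      simpa only [norm_indicator_eq_indicator_norm,
        convolution_indicator_Ioi_eq_indicator_lconv] using
        ha.norm.convolutionExistsAt_indicator_Ioi (hb.norm.lconv hc.norm) t)
  simpa only [convolution_indicator_Ioi_eq_indicator_lconv, indicator_of_mem ht] using hassoc

end lconv

/-- The power kernel `h_{m+1}`, that is `t ^ m / m!`; the index is shifted by one from the usual
`h_α(t) = t ^ (α - 1) / Γ(α)` so that it ranges over all of `ℕ`. -/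
noncomputable def powKernel (m : ℕ) : ℝ → ℝ := fun t => t ^ m / m.factorial

section powKernel

variable {ψ : ℝ → ℝ}

theorem cm1_powKernel (m : ℕ) : Cm1 (powKernel m) :=
  ⟨m, neg_one_lt_zero.trans_le m.cast_nonneg, fun _ => (m.factorial : ℝ)⁻¹, continuousOn_const,
    fun t _ => by rw [rpow_natCast, powKernel, div_eq_mul_inv]⟩

theorem lconv_powKernel_zero (ψ : ℝ → ℝ) :
    lconv (powKernel 0) ψ = fun t => ∫ τ in (0 : ℝ)..t, ψ τ := by
  ext t
  simp [lconv, powKernel]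

theorem powKernel_succ (m : ℕ) : powKernel (m + 1) = lconv (powKernel 0) (powKernel m) := by
  ext t
  simp only [lconv_powKernel_zero, powKernel, intervalIntegral.integral_div, integral_pow,
    Nat.factorial_succ, Nat.cast_mul, Nat.cast_succ]
  rw [zero_pow m.succ_ne_zero, sub_zero, div_div]

theorem lconv_powKernel_succ (hψ : Cm1 ψ) (m : ℕ) :
    EqOn (lconv (powKernel (m + 1)) ψ) (lconv (powKernel 0) (lconv (powKernel m) ψ)) (Ioi 0) :=
  powKernel_succ m ▸ lconv_assoc (cm1_powKernel 0) (cm1_powKernel m) hψ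

theorem hasDerivAt_lconv_powKernel_zero (hψ : Cm1 ψ) {t : ℝ} (ht : 0 < t) :
    HasDerivAt (lconv (powKernel 0) ψ) (ψ t) t := by
  rw [lconv_powKernel_zero]
  exact intervalIntegral.integral_hasDerivAt_right (hψ.intervalIntegrable ht.le)
    (hψ.continuousOn.stronglyMeasurableAtFilter isOpen_Ioi t ht)
    (hψ.continuousOn.continuousAt (Ioi_mem_nhds ht))

theorem hasDerivAt_lconv_powKernel_succ (hψ : Cm1 ψ) (m : ℕ) {t : ℝ} (ht : 0 < t) :
    HasDerivAt (lconv (powKernel (m + 1)) ψ) (lconv (powKernel m) ψ t) t :=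
  (hasDerivAt_lconv_powKernel_zero ((cm1_powKernel m).lconv hψ) ht).congr_of_eventuallyEq
    ((lconv_powKernel_succ hψ m).eventuallyEq_of_mem (Ioi_mem_nhds ht))

theorem differentiableAt_lconv_powKernel (hψ : Cm1 ψ) (m : ℕ) {t : ℝ} (ht : 0 < t) :
    DifferentiableAt ℝ (lconv (powKernel m) ψ) t := by
  cases m with
  | zero => exact (hasDerivAt_lconv_powKernel_zero hψ ht).differentiableAt
  | succ m => exact (hasDerivAt_lconv_powKernel_succ hψ m ht).differentiableAt

theorem tendsto_lconv_powKernel_nhdsGT_zero (hψ : Cm1 ψ) (m : ℕ) :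
    Tendsto (lconv (powKernel m) ψ) (𝓝[>] 0) (𝓝 0) := by
  cases m with
  | zero => exact lconv_powKernel_zero ψ ▸ hψ.tendsto_primitive_nhdsGT_zero
  | succ m =>
    refine Tendsto.congr' ((lconv_powKernel_succ hψ m).symm.eventuallyEq_of_mem
      self_mem_nhdsWithin) ?_
    exact lconv_powKernel_zero _ ▸ ((cm1_powKernel m).lconv hψ).tendsto_primitive_nhdsGT_zero

theorem iteratedDeriv_lconv_powKernel_add (hψ : Cm1 ψ) (j m : ℕ) :
    EqOn (iteratedDeriv j (lconv (powKernel (j + m)) ψ)) (lconv (powKernel m) ψ) (Ioi 0) := by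
  induction j generalizing m with
  | zero => simp [EqOn]
  | succ j ih =>
    intro t ht
    rw [iteratedDeriv_succ, add_assoc, add_comm 1 m,
      ((ih (m + 1)).eventuallyEq_of_mem (Ioi_mem_nhds ht)).deriv_eq]
    exact (hasDerivAt_lconv_powKernel_succ hψ m ht).deriv

theorem iteratedDeriv_succ_lconv_powKernel (hψ : Cm1 ψ) (N : ℕ) :
    EqOn (iteratedDeriv (N + 1) (lconv (powKernel N) ψ)) ψ (Ioi 0) := by
  intro t ht
  rw [iteratedDeriv_succ]
  exact ((iteratedDeriv_lconv_powKernel_add hψ N 0).eventuallyEq_of_mem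
    (Ioi_mem_nhds ht)).deriv_eq.trans (hasDerivAt_lconv_powKernel_zero hψ ht).deriv

theorem differentiableAt_iteratedDeriv_lconv_powKernel (hψ : Cm1 ψ) {j N : ℕ} (hj : j ≤ N)
    {t : ℝ} (ht : 0 < t) : DifferentiableAt ℝ (iteratedDeriv j (lconv (powKernel N) ψ)) t := by
  obtain ⟨m, rfl⟩ := Nat.exists_eq_add_of_le hj
  exact (differentiableAt_lconv_powKernel hψ m ht).congr_of_eventuallyEq
    ((iteratedDeriv_lconv_powKernel_add hψ j m).eventuallyEq_of_mem (Ioi_mem_nhds ht))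

theorem tendsto_iteratedDeriv_lconv_powKernel_nhdsGT_zero (hψ : Cm1 ψ) {j N : ℕ} (hj : j ≤ N) :
    Tendsto (iteratedDeriv j (lconv (powKernel N) ψ)) (𝓝[>] 0) (𝓝 0) := by
  obtain ⟨m, rfl⟩ := Nat.exists_eq_add_of_le hj
  exact (tendsto_lconv_powKernel_nhdsGT_zero hψ m).congr'
    ((iteratedDeriv_lconv_powKernel_add hψ j m).symm.eventuallyEq_of_mem self_mem_nhdsWithin)

end powKernel

theorem statement12_general (n : ℕ) (hn : 1 ≤ n) (κ k : ℝ → ℝ) (hκ : Cm1 κ) (hk : Cm1 k)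
    (hL : ∀ t : ℝ, 0 < t → lconv κ k t = t ^ (n - 1) / (n - 1).factorial)
    (f φ : ℝ → ℝ) (hφ : Cm1 φ) (hf : ∀ t : ℝ, 0 < t → f t = lconv k φ t) (c : ℕ → ℝ)
    (hc : ∀ j < n, Tendsto (iteratedDeriv j (lconv κ f)) (𝓝[>] 0) (𝓝 (c j))) :
    (∀ m < n, ∀ t : ℝ, 0 < t →
        DifferentiableAt ℝ
          (iteratedDeriv m (lconv k (fun u =>
            lconv κ f u - ∑ j ∈ Finset.range n, c j * u ^ j / j.factorial))) t) ∧
      ∀ t : ℝ, 0 < t →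
        iteratedDeriv n (lconv k (fun u =>
          lconv κ f u - ∑ j ∈ Finset.range n, c j * u ^ j / j.factorial)) t = f t := by
  obtain ⟨N, rfl⟩ := Nat.exists_eq_add_of_le' hn
  have hf_cm1 : Cm1 f := (hk.lconv hφ).congr hf
  have hκf : EqOn (lconv κ f) (lconv (powKernel N) φ) (Ioi 0) :=
    (lconv_congr (eqOn_refl κ _) hf).trans <|
      (lconv_assoc hκ hk hφ).symm.trans (lconv_congr hL (eqOn_refl φ _))
  have hkκf : EqOn (lconv k (lconv κ f)) (lconv (powKernel N) f) (Ioi 0) :=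
    (lconv_assoc hk hκ hf_cm1).symm.trans <| lconv_comm κ k ▸ lconv_congr hL (eqOn_refl f _)
  have hc_zero : ∀ j < N + 1, c j = 0 := fun j hj =>
    tendsto_nhds_unique (hc j hj) <|
      (tendsto_iteratedDeriv_lconv_powKernel_nhdsGT_zero hφ (Nat.le_of_lt_succ hj)).congr'
        ((hκf.iteratedDeriv_of_isOpen isOpen_Ioi j).symm.eventuallyEq_of_mem self_mem_nhdsWithin)
  have hcaputo : (fun u => lconv κ f u - ∑ j ∈ Finset.range (N + 1), c j * u ^ j / j.factorial) =
      lconv κ f := by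
    ext u
    rw [Finset.sum_eq_zero fun j hj => by simp [hc_zero j (Finset.mem_range.1 hj)], sub_zero]
  rw [hcaputo]
  refine ⟨fun m hm t ht => ?_, fun t ht => ?_⟩
  · exact (differentiableAt_iteratedDeriv_lconv_powKernel hf_cm1 (Nat.le_of_lt_succ hm)
      ht).congr_of_eventuallyEq
        ((hkκf.iteratedDeriv_of_isOpen isOpen_Ioi m).eventuallyEq_of_mem (Ioi_mem_nhds ht))
  · exact (hkκf.iteratedDeriv_of_isOpen isOpen_Ioi (N + 1) ht).trans
      (iteratedDeriv_succ_lconv_powKernel hf_cm1 N ht)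

/-- First Fundamental Theorem for the GFD of arbitrary order, Caputo case:
for a pair `(κ, k) ∈ L_n` and `f ∈ C_{-1,k}(0,∞)`, i.e. `f = k * φ` with `φ ∈ C_{-1}(0,∞)`,
one has `(∗D_{(k)} I_{(κ)} f)(t) = f(t)` for all `t > 0`, where
`(∗D_{(k)} g)(t) = dⁿ/dtⁿ (k * [g(·) - ∑_{j<n} g^{(j)}(0) h_{j+1}(·)])(t)` and
`g^{(j)}(0) = c j` denotes the limit of `g^{(j)}` at `0+` for `g = κ * f`. -/
theorem statement12 (n : ℕ) (hn : 1 ≤ n) (κ k : ℝ → ℝ)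
    (hκ : Cm1 κ) (hk : Cm10 k)
    (hL : ∀ t : ℝ, 0 < t → lconv κ k t = t ^ (n - 1) / (n - 1).factorial)
    (f φ : ℝ → ℝ) (hφ : Cm1 φ)
    (hf : ∀ t : ℝ, 0 < t → f t = lconv k φ t)
    (c : ℕ → ℝ)
    (hc : ∀ j < n, Filter.Tendsto (iteratedDeriv j (lconv κ f))
      (nhdsWithin 0 (Set.Ioi 0)) (nhds (c j))) :
    (∀ m < n, ∀ t : ℝ, 0 < t →
        DifferentiableAt ℝ
          (iteratedDeriv m (lconv k (fun u =>
            lconv κ f u - ∑ j ∈ Finset.range n, c j * u ^ j / j.factorial))) t) ∧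
      ∀ t : ℝ, 0 < t →
        iteratedDeriv n (lconv k (fun u =>
          lconv κ f u - ∑ j ∈ Finset.range n, c j * u ^ j / j.factorial)) t = f t :=
  statement12_general n hn κ k hκ hk.cm1 hL f φ hφ hf c hc
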